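/- Let t ≥ 4 and let p_0, p_1, …, p_{2^{t-2}-2} be polynomials in F_2[w_2,w_3], regarded as elements of F_2[w_2,w_3,w_4]. Then the sum Σ_{j=0}^{2^{t-2}-2} p_j·w_4^j belongs to I_{2^t-1,4} if and only if p_j belongs to I_{2^t,3} for every j ∈ {0,1,…,2^{t-2}-2}. -/

import Mathlib

open MvPolynomial

/-- The polynomials `g_r = g_r^{(4)}` in `F_2[w_2,w_3,w_4]` (variables `X 0 = w_2`,
`X 1 = w_3`, `X 2 = w_4`): `g_0 = 1`, `g_r = 0` for `r < 0`, and
`g_r = w_2·g_{r-2} + w_3·g_{r-3} + w_4·g_{r-4}` for `r ≥ 1`. -/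
noncomputable def g4 : ℤ → MvPolynomial (Fin 3) (ZMod 2)
  | r =>
    if r ≤ 0 then (if r = 0 then 1 else 0)
    else X 0 * g4 (r - 2) + X 1 * g4 (r - 3) + X 2 * g4 (r - 4)
  termination_by r => r.toNat
  decreasing_by all_goals omega

/-- The ideal `I_{n,4} = (g_{n-3}, g_{n-2}, g_{n-1}, g_n)` of `F_2[w_2,w_3,w_4]`. -/
noncomputable def I4 (n : ℤ) : Ideal (MvPolynomial (Fin 3) (ZMod 2)) :=
  Ideal.span {g4 (n - 3), g4 (n - 2), g4 (n - 1), g4 n}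

/-- The polynomials `g_r^{(3)}` in `F_2[w_2,w_3]` (variables `X 0 = w_2`, `X 1 = w_3`):
`g^{(3)}_0 = 1`, `g^{(3)}_r = 0` for `r < 0`, and
`g^{(3)}_r = w_2·g^{(3)}_{r-2} + w_3·g^{(3)}_{r-3}` for `r ≥ 1`. -/
noncomputable def g3 : ℤ → MvPolynomial (Fin 2) (ZMod 2)
  | r =>
    if r ≤ 0 then (if r = 0 then 1 else 0)
    else X 0 * g3 (r - 2) + X 1 * g3 (r - 3)
  termination_by r => r.toNat
  decreasing_by all_goals omega

/-- The ideal `I_{n,3} = (g^{(3)}_{n-2}, g^{(3)}_{n-1}, g^{(3)}_n)` of `F_2[w_2,w_3]`. -/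
noncomputable def I3 (n : ℤ) : Ideal (MvPolynomial (Fin 2) (ZMod 2)) :=
  Ideal.span {g3 (n - 2), g3 (n - 1), g3 n}

/-- The natural inclusion `F_2[w_2,w_3] ⊆ F_2[w_2,w_3,w_4]`. -/
noncomputable def incl : MvPolynomial (Fin 2) (ZMod 2) →+* MvPolynomial (Fin 3) (ZMod 2) :=
  (rename (Fin.castSucc : Fin 2 → Fin 3)).toRingHom

theorem dbl {R : Type*} [CommRing R] [CharP R 2] (f : ℤ → R) (a b c : R)
    (hneg : ∀ r < 0, f r = 0) (h0 : f 0 = 1)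
    (hrec : ∀ r ≥ 1, f r = a * f (r - 2) + b * f (r - 3) + c * f (r - 4)) (n : ℕ) :
    ∀ m : ℤ, m < n → f (2 * m) = f m ^ 2 + a * f (m - 1) ^ 2 + c * f (m - 2) ^ 2 ∧
      f (2 * m + 1) = b * f (m - 1) ^ 2 := by
  have two : (2 : R) = 0 := CharTwo.two_eq_zero
  induction n with
  | zero =>
    intro m hm
    simp only [Nat.cast_zero] at hm
    rw [hneg (2 * m) (by omega), hneg (2 * m + 1) (by omega), hneg m (by omega),
      hneg (m - 1) (by omega), hneg (m - 2) (by omega)]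
    simp
  | succ n ih =>
    intro m hm
    push_cast at hm
    rcases lt_or_ge m 0 with hm0 | hm0
    · rw [hneg (2 * m) (by omega), hneg (2 * m + 1) (by omega), hneg m (by omega),
        hneg (m - 1) (by omega), hneg (m - 2) (by omega)]
      simp
    have e1 := ih (m - 1) (by omega)
    have e2 := ih (m - 2) (by omega)
    rw [show 2 * (m - 1) = 2 * m - 2 by ring, show 2 * m - 2 + 1 = 2 * m - 1 by ring,
      show m - 1 - 1 = m - 2 by ring, show m - 1 - 2 = m - 3 by ring] at e1
    rw [show 2 * (m - 2) = 2 * m - 4 by ring, show 2 * m - 4 + 1 = 2 * m - 3 by ring,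
      show m - 2 - 1 = m - 3 by ring, show m - 2 - 2 = m - 4 by ring] at e2
    constructor
    · rcases eq_or_lt_of_le hm0 with h | h
      · subst h
        simp [h0, hneg]
      · rw [hrec (2 * m) (by omega), e1.1, e2.2, e2.1, hrec m (by omega)]
        linear_combination (a * c * f (m - 3) ^ 2 - a * b * f (m - 2) * f (m - 3)
          - a * c * f (m - 2) * f (m - 4) - b * c * f (m - 3) * f (m - 4)) * two
    · rw [hrec (2 * m + 1) (by omega), show 2 * m + 1 - 2 = 2 * m - 1 by ring,
        show 2 * m + 1 - 3 = 2 * m - 2 by ring, show 2 * m + 1 - 4 = 2 * m - 3 by ring,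
        e1.1, e1.2, e2.2]
      linear_combination (a * b * f (m - 2) ^ 2 + b * c * f (m - 3) ^ 2) * two

theorem topdeg {S : Type*} [CommRing S] (f : ℤ → Polynomial S) (a b : S)
    (hneg : ∀ r < 0, f r = 0) (h0 : f 0 = 1)
    (hrec : ∀ r ≥ 1, f r = Polynomial.C a * f (r - 2) + Polynomial.C b * f (r - 3)
      + Polynomial.X * f (r - 4)) (n : ℕ) :
    ∀ r : ℤ, r < n → (∀ k : ℕ, r < 4 * k → (f r).coeff k = 0) ∧
      (∀ k : ℕ, r = 4 * k → (f r).coeff k = 1) := by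
  induction n with
  | zero =>
    intro r hr
    simp only [Nat.cast_zero] at hr
    rw [hneg r hr]
    refine ⟨by simp, fun k hk => by omega⟩
  | succ n ih =>
    intro r hr
    push_cast at hr
    rcases lt_trichotomy r 0 with h | h | h
    · rw [hneg r h]
      refine ⟨by simp, fun k hk => by omega⟩
    · subst h
      rw [h0]
      refine ⟨fun k hk => ?_, fun k hk => ?_⟩
      · rw [Polynomial.coeff_one, if_neg (by omega)]
      · rw [Polynomial.coeff_one, if_pos (by omega)]
    · rw [hrec r (by omega)]
      refine ⟨fun k hk => ?_, fun k hk => ?_⟩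
      all_goals
        obtain ⟨k, rfl⟩ : ∃ j, k = j + 1 := ⟨k - 1, by omega⟩
        push_cast at hk
        rw [Polynomial.coeff_add, Polynomial.coeff_add, Polynomial.coeff_C_mul,
          Polynomial.coeff_C_mul, Polynomial.coeff_X_mul,
          (ih (r - 2) (by omega)).1 (k + 1) (by push_cast; omega),
          (ih (r - 3) (by omega)).1 (k + 1) (by push_cast; omega)]
      · rw [(ih (r - 4) (by omega)).1 k (by omega)]; simp
      · rw [(ih (r - 4) (by omega)).2 k (by omega)]; simp

theorem lowdeg {S : Type*} [CommRing S] (M : Polynomial S) (K : ℕ) (hdeg : M.natDegree ≤ K)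
    (hco : M.coeff K = 1) (c : ℕ → S)
    (hd : (∑ j ∈ Finset.range K, Polynomial.C (c j) * Polynomial.X ^ j) ∈ Ideal.span {M}) (j : ℕ) (hj : j < K) :
    c j = 0 := by
  have hmon := Polynomial.monic_of_natDegree_le_of_coeff_eq_one K hdeg hco
  by_contra hne
  have hnt : Nontrivial S := ⟨_, _, hne⟩
  have hKd : M.degree = K := by
    rw [Polynomial.degree_eq_natDegree hmon.ne_zero]
    congr 1
    exact le_antisymm hdeg (Polynomial.le_natDegree_of_ne_zero (by rw [hco]; exact one_ne_zero))
  refine hmon.not_dvd_of_degree_lt (p := M) ?_ ?_ (Ideal.mem_span_singleton.1 hd)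
  · intro h0
    have := congrArg (fun P => Polynomial.coeff P j) h0
    simp [Polynomial.coeff_X_pow] at this
    exact hne (this hj)
  · rw [hKd, Polynomial.degree_lt_iff_coeff_zero]
    intro k hk
    simp only [Polynomial.finsetSum_coeff, Polynomial.coeff_C_mul, Polynomial.coeff_X_pow]
    refine Finset.sum_eq_zero fun i hi => ?_
    rw [if_neg (by have := Finset.mem_range.1 hi; omega), mul_zero]

theorem g4_neg (r : ℤ) (h : r < 0) : g4 r = 0 := by
  rw [g4, if_pos h.le, if_neg h.ne]
theorem g4_zero : g4 0 = 1 := by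
  rw [g4]; simp
theorem g4_rec (r : ℤ) (h : r ≥ 1) :
    g4 r = X 0 * g4 (r - 2) + X 1 * g4 (r - 3) + X 2 * g4 (r - 4) := by
  rw [g4, if_neg (by omega)]
theorem g3_neg (r : ℤ) (h : r < 0) : g3 r = 0 := by
  rw [g3, if_pos h.le, if_neg h.ne]
theorem g3_zero : g3 0 = 1 := by
  rw [g3]; simp
theorem g3_rec (r : ℤ) (h : r ≥ 1) :
    g3 r = X 0 * g3 (r - 2) + X 1 * g3 (r - 3) + 0 * g3 (r - 4) := by
  rw [g3, if_neg (by omega)]; simp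

theorem g4_dbl (m : ℤ) : g4 (2 * m) = g4 m ^ 2 + X 0 * g4 (m - 1) ^ 2 + X 2 * g4 (m - 2) ^ 2 ∧
    g4 (2 * m + 1) = X 1 * g4 (m - 1) ^ 2 :=
  dbl g4 _ _ _ g4_neg g4_zero g4_rec (m.toNat + 1) m (by omega)
theorem g3_dbl (m : ℤ) : g3 (2 * m) = g3 m ^ 2 + X 0 * g3 (m - 1) ^ 2 + 0 * g3 (m - 2) ^ 2 ∧
    g3 (2 * m + 1) = X 1 * g3 (m - 1) ^ 2 :=
  dbl g3 _ _ _ g3_neg g3_zero g3_rec (m.toNat + 1) m (by omega)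

theorem incl_X0 : incl (X 0) = X 0 := by simp [incl]
theorem incl_X1 : incl (X 1) = X 1 := by simp [incl]

theorem special (s : ℕ) : g4 (2 ^ (s + 1) - 3) = 0 ∧ g3 (2 ^ (s + 1) - 3) = 0 ∧
    incl (g3 (2 ^ (s + 1) - 2)) = g4 (2 ^ (s + 1) - 2) ∧
    incl (g3 (2 ^ (s + 1) - 1)) = g4 (2 ^ (s + 1) - 1) := by
  induction s with
  | zero =>
    norm_num
    refine ⟨g4_neg _ (by norm_num), g3_neg _ (by norm_num), by simp [g3_zero, g4_zero], ?_⟩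
    rw [g3_rec 1 (by norm_num), g4_rec 1 (by norm_num)]
    simp [g3_neg, g4_neg]
  | succ s ih =>
    obtain ⟨i1, i2, i3, i4⟩ := ih
    generalize hq : (2 : ℤ) ^ (s + 1) = q at *
    have hq2 : (2 : ℤ) ^ (s + 1 + 1) = 2 * q := by rw [pow_succ, hq]; ring
    rw [hq2]
    have d1 := g4_dbl (q - 1)
    have d2 := g3_dbl (q - 1)
    have d3 := (g4_dbl (q - 2)).2
    have d4 := (g3_dbl (q - 2)).2
    rw [show 2 * (q - 1) = 2 * q - 2 by ring, show 2 * q - 2 + 1 = 2 * q - 1 by ring,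
      show q - 1 - 1 = q - 2 by ring, show q - 1 - 2 = q - 3 by ring] at d1 d2
    rw [show 2 * (q - 2) + 1 = 2 * q - 3 by ring, show q - 2 - 1 = q - 3 by ring] at d3 d4
    refine ⟨by rw [d3, i1]; simp, by rw [d4, i2]; simp, ?_, ?_⟩
    · rw [d1.1, d2.1, i1, i2]; simp [i3, i4, incl_X0]
    · rw [d1.2, d2.2]; simp [i3, incl_X1]

theorem stmt4 (t : ℕ) (ht : 4 ≤ t) (p : ℕ → MvPolynomial (Fin 2) (ZMod 2)) :
    (∑ j ∈ Finset.range (2 ^ (t - 2) - 1), incl (p j) * X 2 ^ j) ∈ I4 (2 ^ t - 1) ↔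
      ∀ j < 2 ^ (t - 2) - 1, p j ∈ I3 (2 ^ t) := by
  obtain ⟨s, rfl⟩ : ∃ s, t = s + 2 := ⟨t - 2, by omega⟩
  obtain ⟨z4, z3, e2, e1⟩ := special (s + 1)
  rw [show s + 1 + 1 = s + 2 by ring] at z4 z3 e2 e1
  rw [show s + 2 - 2 = s by omega]
  set K : ℕ := 2 ^ s - 1 with hK
  have hKq : (2 : ℤ) ^ (s + 2) = 4 * (K : ℤ) + 4 := by
    have : 1 ≤ 2 ^ s := Nat.one_le_two_pow
    rw [hK, Nat.cast_sub this]; push_cast; ring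
  have hq0 : (0 : ℤ) ≤ K := by positivity
  generalize (2 : ℤ) ^ (s + 2) = q at *
  have z0 : g3 q = X 0 * g3 (q - 2) := by
    rw [g3_rec q (by omega), z3]; simp
  constructor
  · intro h
    set π := Ideal.Quotient.mk (I3 q) with hπ
    let χ : MvPolynomial (Fin 3) (ZMod 2) →+* Polynomial (MvPolynomial (Fin 2) (ZMod 2) ⧸ I3 q) :=
      eval₂Hom ((Polynomial.C.comp π).comp MvPolynomial.C)
        ![Polynomial.C (π (X 0)), Polynomial.C (π (X 1)), Polynomial.X]
    have χ0 : χ (X 0) = Polynomial.C (π (X 0)) := by simp [χ]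
    have χ1 : χ (X 1) = Polynomial.C (π (X 1)) := by simp [χ]
    have χ2 : χ (X 2) = Polynomial.X := by simp [χ]
    have χi : ∀ x, χ (incl x) = Polynomial.C (π x) := by
      have : χ.comp incl = Polynomial.C.comp π := by
        apply MvPolynomial.ringHom_ext
        · intro r; simp [χ, incl]
        · intro i
          fin_cases i
          · simp [incl_X0, χ0]
          · simp [incl_X1, χ1]
      intro x
      exact RingHom.congr_fun this x
    have td := topdeg (fun r => χ (g4 r)) (π (X 0)) (π (X 1))
      (fun r hr => by simp [g4_neg r hr]) (by simp [g4_zero])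
      (fun r hr => by simp only [g4_rec r hr, map_add, map_mul, χ0, χ1, χ2])
      ((q - 4).toNat + 1) (q - 4) (by omega)
    have hdeg : (χ (g4 (q - 4))).natDegree ≤ K :=
      Polynomial.natDegree_le_iff_coeff_eq_zero.2 fun k hk => td.1 k (by omega)
    have hco : (χ (g4 (q - 4))).coeff K = 1 := td.2 K (by omega)
    have hle : I4 (q - 1) ≤ (Ideal.span {χ (g4 (q - 4))}).comap χ := by
      rw [I4, Ideal.span_le]
      have k2 : π (g3 (q - 2)) = 0 :=
        Ideal.Quotient.eq_zero_iff_mem.2 (Ideal.subset_span (by simp))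
      have k1 : π (g3 (q - 1)) = 0 :=
        Ideal.Quotient.eq_zero_iff_mem.2 (Ideal.subset_span (by simp))
      rintro x (rfl | rfl | rfl | rfl)
      · rw [show q - 1 - 3 = q - 4 by ring]
        exact Ideal.subset_span rfl
      · rw [show q - 1 - 2 = q - 3 by ring, z4]; exact Ideal.zero_mem _
      · rw [show q - 1 - 1 = q - 2 by ring, ← e2, SetLike.mem_coe, Ideal.mem_comap, χi, k2]
        simp
      · rw [← e1, SetLike.mem_coe, Ideal.mem_comap, χi, k1]
        simp
    have hd := hle h
    rw [Ideal.mem_comap] at hd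
    simp only [map_sum, map_mul, map_pow, χi, χ2] at hd
    intro j hj
    rw [← Ideal.Quotient.eq_zero_iff_mem]
    exact lowdeg _ K hdeg hco (fun j => π (p j)) hd j hj
  · intro h
    refine Ideal.sum_mem _ fun j hj => Ideal.mul_mem_right _ _ ?_
    have hle : I3 q ≤ (I4 (q - 1)).comap incl := by
      have m2 : g4 (q - 2) ∈ I4 (q - 1) :=
        Ideal.subset_span (by rw [show q - 1 - 1 = q - 2 by ring]; simp)
      have m1 : g4 (q - 1) ∈ I4 (q - 1) := Ideal.subset_span (by simp)
      rw [I3, Ideal.span_le]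
      rintro x (rfl | rfl | rfl) <;> rw [SetLike.mem_coe, Ideal.mem_comap]
      · rwa [e2]
      · rwa [e1]
      · rw [z0, map_mul, e2]; exact Ideal.mul_mem_left _ _ m2
    exact hle (h j (Finset.mem_range.1 hj))
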